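/- For every real a > 0 and natural number m, lim_{t → ∞} t^{m+1} · μ_{a,m}((t, ∞)) = 1 / ( (m+1)! · a^{m+1} ). That is, the upper tail of the inverse-gamma law satisfies 1 - F_{a,m}(t) ~ ( (m+1)! (a t)^{m+1} )^{-1} as t → ∞. -/

import Mathlib

open Filter MeasureTheory

/-- The inverse-gamma density with shape `m+1` and scale `1/a`:
`f a m x = x^{-(m+2)} e^{-1/(a x)} / (m! a^{m+1})` for `x > 0`, and `0` otherwise. -/
noncomputable def invGammaDensity (a : ℝ) (m : ℕ) (x : ℝ) : ℝ :=
  if 0 < x then x ^ (-((m : ℤ) + 2)) * Real.exp (-(1 / (a * x))) / (m.factorial * a ^ (m + 1))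
  else 0

/-- The inverse-gamma probability measure `μ_{a,m}` on `ℝ`. -/
noncomputable def invGammaMeasure (a : ℝ) (m : ℕ) : Measure ℝ :=
  volume.withDensity (fun x => ENNReal.ofReal (invGammaDensity a m x))

/-!
If `x ^ p * f x → c` at infinity with `p > 1`, then rescaling by `x = t * u` gives
`t ^ (p - 1) * ∫ x in (t, ∞), f x = ∫ u in (1, ∞), u ^ (-p) * ((t * u) ^ p * f (t * u))`,
which tends to `∫ u in (1, ∞), u ^ (-p) * c = c / (p - 1)` by dominated convergence. The
inverse-gamma density satisfies this with `p = m + 2` and `c = 1 / (m! a ^ (m + 1))`, because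
`exp (-1 / (a x)) → 1`.
-/

section PowerTail

variable {E : Type*} [NormedAddCommGroup E] [NormedSpace ℝ E]

lemma rpow_sub_one_smul_integral_Ioi (f : ℝ → E) (p : ℝ) {t : ℝ} (ht : 0 < t) :
    t ^ (p - 1) • ∫ x in Set.Ioi t, f x =
      ∫ u in Set.Ioi 1, u ^ (-p) • (t * u) ^ p • f (t * u) := by
  have rescale : ∫ x in Set.Ioi t, f x = t • ∫ u in Set.Ioi 1, f (t * u) := by
    rw [integral_comp_mul_left_Ioi f 1 ht, mul_one, smul_inv_smul₀ ht.ne']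
  rw [rescale, smul_smul, ← Real.rpow_add_one ht.ne', sub_add_cancel, ← integral_smul]
  refine setIntegral_congr_fun measurableSet_Ioi fun u hu => ?_
  have hu₀ : 0 < u := zero_lt_one.trans hu
  simp only [smul_smul]
  rw [Real.mul_rpow ht.le hu₀.le, Real.rpow_neg hu₀.le, mul_left_comm,
    inv_mul_cancel₀ (Real.rpow_pos_of_pos hu₀ p).ne', mul_one]

theorem tendsto_rpow_sub_one_smul_integral_Ioi [CompleteSpace E] {f : ℝ → E} {p : ℝ} {c : E}
    (hp : 1 < p) (hf : AEStronglyMeasurable f)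
    (hlim : Tendsto (fun x => x ^ p • f x) atTop (nhds c)) :
    Tendsto (fun t => t ^ (p - 1) • ∫ x in Set.Ioi t, f x) atTop (nhds ((p - 1)⁻¹ • c)) := by
  have integral_limit : ∫ u in Set.Ioi (1 : ℝ), u ^ (-p) • c = (p - 1)⁻¹ • c := by
    rw [integral_smul_const, integral_Ioi_rpow_of_lt (neg_lt_neg hp) one_pos, Real.one_rpow,
      neg_div, ← div_neg, neg_add, neg_neg, ← sub_eq_add_neg, one_div]
  have eventually_bounded : ∀ᶠ x in atTop, ‖x ^ p • f x‖ ≤ ‖c‖ + 1 :=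
    hlim.norm.eventually_le_const (lt_add_one _)
  rw [← integral_limit]
  refine Tendsto.congr' ((eventually_gt_atTop 0).mono fun t ht =>
    (rpow_sub_one_smul_integral_Ioi f p ht).symm) ?_
  refine tendsto_integral_filter_of_dominated_convergence (fun u => u ^ (-p) * (‖c‖ + 1))
    ?measurable ?bound ((integrableOn_Ioi_rpow_of_lt (neg_lt_neg hp) one_pos).mul_const _)
    ?pointwise
  case measurable =>
    filter_upwards [eventually_gt_atTop 0] with t ht
    have hft : AEStronglyMeasurable fun u => f (t * u) :=
      hf.comp_quasiMeasurePreserving (Measure.quasiMeasurePreserving_smul volume ht.ne')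
    exact (measurable_id.pow_const (-p)).aestronglyMeasurable.smul
      (((measurable_id.const_mul t).pow_const p).aestronglyMeasurable.smul hft.restrict)
  case bound =>
    filter_upwards [eventually_gt_atTop 0, eventually_forall_ge_atTop.2 eventually_bounded]
      with t ht hbound
    filter_upwards [ae_restrict_mem measurableSet_Ioi] with u hu
    have hu₀ : 0 ≤ u ^ (-p) := Real.rpow_nonneg (zero_le_one.trans hu.le) _
    rw [norm_smul, Real.norm_of_nonneg hu₀]
    exact mul_le_mul_of_nonneg_left (hbound _ (le_mul_of_one_le_right ht.le hu.le)) hu₀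
  case pointwise =>
    filter_upwards [ae_restrict_mem measurableSet_Ioi] with u hu
    have hu₀ : 0 < u := zero_lt_one.trans hu
    exact (hlim.comp (tendsto_id.atTop_mul_const hu₀)).const_smul _

end PowerTail

lemma measurable_invGammaDensity (a : ℝ) (m : ℕ) : Measurable (invGammaDensity a m) :=
  Measurable.ite measurableSet_Ioi (by fun_prop) measurable_const

lemma invGammaDensity_nonneg {a : ℝ} (ha : 0 ≤ a) (m : ℕ) (x : ℝ) : 0 ≤ invGammaDensity a m x := by
  unfold invGammaDensity
  split_ifs <;> positivity

lemma toReal_invGammaMeasure {a : ℝ} (ha : 0 ≤ a) (m : ℕ) (s : Set ℝ) :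
    (invGammaMeasure a m s).toReal = ∫ x in s, invGammaDensity a m x := by
  rw [invGammaMeasure, withDensity_apply' _ s, integral_eq_lintegral_of_nonneg_ae
    (.of_forall (invGammaDensity_nonneg ha m))
    (measurable_invGammaDensity a m).aestronglyMeasurable]

lemma tendsto_pow_mul_invGammaDensity (a : ℝ) (m : ℕ) :
    Tendsto (fun x => x ^ (m + 2) * invGammaDensity a m x) atTop
      (nhds (1 / (m.factorial * a ^ (m + 1)))) := by
  have exponent_tendsto : Tendsto (fun x : ℝ => -(1 / (a * x))) atTop (nhds 0) := by
    simpa [mul_comm] using (tendsto_inv_atTop_zero.mul_const a⁻¹).neg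
  have exp_tendsto : Tendsto (fun x : ℝ => Real.exp (-(1 / (a * x)))) atTop (nhds 1) := by
    simpa only [Real.exp_zero] using exponent_tendsto.rexp
  refine (exp_tendsto.div_const _).congr' ?_
  filter_upwards [eventually_gt_atTop 0] with x hx
  have cancel_pow : x ^ (m + 2) * x ^ (-((m : ℤ) + 2)) = 1 := by
    rw [zpow_neg]
    exact_mod_cast mul_inv_cancel₀ (pow_ne_zero (m + 2) hx.ne')
  rw [invGammaDensity, if_pos hx, ← mul_div_assoc, ← mul_assoc, cancel_pow, one_mul]

/-- Upper-tail asymptotics of the inverse-gamma law: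
`1 - F_{a,m}(t) = μ_{a,m}((t,∞)) ~ ((m+1)! (a t)^{m+1})⁻¹` as `t → ∞`. -/
theorem inverse_gamma_tail (a : ℝ) (ha : 0 < a) (m : ℕ) :
    Tendsto (fun t : ℝ => t ^ (m + 1) * (invGammaMeasure a m (Set.Ioi t)).toReal)
      atTop (nhds (1 / (((m + 1).factorial : ℝ) * a ^ (m + 1)))) := by
  have exponent_sub_one : ((m + 2 : ℕ) : ℝ) - 1 = (m + 1 : ℕ) := by push_cast; ring
  have limit_eq : ((m + 1 : ℕ) : ℝ)⁻¹ * (1 / (m.factorial * a ^ (m + 1))) =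
      1 / ((m + 1).factorial * a ^ (m + 1)) := by
    rw [Nat.factorial_succ, Nat.cast_mul, mul_assoc, one_div, one_div, ← mul_inv]
  have density_limit : Tendsto (fun x : ℝ => x ^ ((m + 2 : ℕ) : ℝ) • invGammaDensity a m x) atTop
      (nhds (1 / (m.factorial * a ^ (m + 1)))) := by
    simpa only [Real.rpow_natCast, smul_eq_mul] using tendsto_pow_mul_invGammaDensity a m
  have tail_limit := tendsto_rpow_sub_one_smul_integral_Ioi (Nat.one_lt_cast.2 (by lia))
    (measurable_invGammaDensity a m).aestronglyMeasurable density_limit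
  simpa only [exponent_sub_one, Real.rpow_natCast, smul_eq_mul, limit_eq,
    ← toReal_invGammaMeasure ha.le] using tail_limit
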